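/- arXiv:0707.3950 — 4 statements merged into one kernel-verified Lean document; each statement's English description precedes it below -/
import Mathlib

section
/- Let m := n(n+1)/2 denote the n-th triangular number, and for every integer p ≥ 1 define R_p := ((-1)^(p-1)/(2p·8^p))·(1 + ∑_{k=1}^p C(p,k)·(-4)^k·B_{2k}(1/2)), where B_{2k}(x) is the Bernoulli polynomial of order 2k. Then for every positive integer n and every integer r ≥ 1 there exists Θ_r with 0 < Θ_r < 1 such that H_n = (1/2)·ln(2m) + γ + ∑_{p=1}^r R_p/m^p + Θ_r · R_{r+1}/m^{r+1}. -/
open Real Finset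

/-- The coefficient `R_p` in Ramanujan's expansion of the harmonic number into
negative powers of the `n`-th triangular number. -/
noncomputable def ramanujanCoeff (p : ℕ) : ℝ :=
  ((-1 : ℝ) ^ (p - 1) / (2 * p * 8 ^ p)) *
    (1 + ∑ k ∈ Finset.Icc 1 p,
      (p.choose k : ℝ) * (-4 : ℝ) ^ k *
        (((Polynomial.bernoulli (2 * k)).eval ((1 : ℚ) / 2) : ℚ) : ℝ))

open MeasureTheory Filter Topology

lemma aux_pow_exp_int (k : ℕ) {c : ℝ} (hc : 0 < c) :
    ∫ t in Set.Ioi (0:ℝ), t ^ k * Real.exp (-(c * t)) = (k.factorial : ℝ) / c ^ (k + 1) := by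
  have hk : (0 : ℝ) < (k:ℝ) + 1 := by positivity
  have key := Real.integral_rpow_mul_exp_neg_mul_Ioi hk hc
  simp only [add_sub_cancel_right, Real.rpow_natCast] at key
  rw [key, Real.Gamma_nat_eq_factorial]
  have : (1 / c) ^ ((k:ℝ) + 1) = (1 / c) ^ (k + 1) := by
    rw [← Real.rpow_natCast]; push_cast; rfl
  rw [this, one_div, inv_pow]
  field_simp

lemma aux_pow_exp_integrable (k : ℕ) {c : ℝ} (hc : 0 < c) :
    IntegrableOn (fun t => t ^ k * Real.exp (-(c * t))) (Set.Ioi (0:ℝ)) := by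
  refine MeasureTheory.Integrable.of_integral_ne_zero ?_
  rw [aux_pow_exp_int k hc]
  positivity

noncomputable def wgt (t : ℝ) : ℝ := 1 / (Real.exp (2 * π * t) + 1)

lemma wgt_pos (t : ℝ) : 0 < wgt t := by unfold wgt; positivity

lemma wgt_le (t : ℝ) : wgt t ≤ Real.exp (-(2 * π * t)) := by
  unfold wgt
  rw [Real.exp_neg, ← one_div]
  apply one_div_le_one_div_of_le (by positivity); linarith

lemma wgt_cont : Continuous wgt := by
  unfold wgt
  refine continuous_const.div (by fun_prop) (fun t => by positivity)

lemma wgt_hasSum {t : ℝ} (ht : 0 < t) :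
    HasSum (fun j : ℕ => (-1 : ℝ) ^ j * Real.exp (-(2 * π * (j + 1) * t))) (wgt t) := by
  have hlt : Real.exp (-(2 * π * t)) < 1 := by
    rw [Real.exp_lt_one_iff]; have := Real.pi_pos; nlinarith [mul_pos this ht]
  have h := hasSum_geometric_of_abs_lt_one (r := -Real.exp (-(2 * π * t)))
    (by rwa [abs_neg, abs_of_pos (Real.exp_pos _)])
  have h2 := h.mul_right (Real.exp (-(2 * π * t)))
  convert! h2 using 1
  · ext j
    rw [neg_pow (Real.exp _), ← Real.exp_nat_mul, mul_assoc ((-1 : ℝ) ^ j), ← Real.exp_add]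
    congr 2; ring
  · unfold wgt
    rw [Real.exp_neg]
    have := Real.exp_pos (2 * π * t)
    generalize Real.exp (2 * π * t) = E at *
    rw [sub_neg_eq_add]
    field_simp

lemma wgt_pow_integrable (k : ℕ) :
    IntegrableOn (fun t => t ^ k * wgt t) (Set.Ioi (0:ℝ)) := by
  refine (aux_pow_exp_integrable k (c := 2 * π) (by positivity)).mono' ?_ ?_
  · exact ((continuous_id.pow k).mul wgt_cont).aestronglyMeasurable
  · filter_upwards [ae_restrict_mem measurableSet_Ioi] with t ht
    have ht : 0 < t := ht
    rw [norm_mul, Real.norm_of_nonneg (wgt_pos t).le, Real.norm_of_nonneg (by positivity)]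
    gcongr
    exact wgt_le t

lemma wgt_series (f : ℝ → ℝ) (hf : Continuous f) (k : ℕ) (C : ℝ) (hk : 1 ≤ k)
    (hb : ∀ t, 0 < t → |f t| ≤ C * t ^ k) :
    HasSum (fun j : ℕ => (-1 : ℝ) ^ j *
      ∫ t in Set.Ioi (0:ℝ), f t * Real.exp (-(2 * π * (j + 1) * t)))
      (∫ t in Set.Ioi (0:ℝ), f t * wgt t) := by
  have hC : ∀ j : ℕ, (0:ℝ) < 2 * π * (j + 1) := fun j => by positivity
  have hbd : ∀ j : ℕ, ∀ᵐ t ∂(volume.restrict (Set.Ioi (0:ℝ))),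
      ‖(-1 : ℝ) ^ j * (f t * Real.exp (-(2 * π * (j + 1) * t)))‖ ≤
        C * (t ^ k * Real.exp (-(2 * π * (j + 1) * t))) := by
    intro j
    filter_upwards [ae_restrict_mem measurableSet_Ioi] with t ht
    rw [norm_mul, norm_mul, norm_pow, norm_neg, norm_one, one_pow, one_mul,
      Real.norm_of_nonneg (Real.exp_pos _).le, ← mul_assoc]
    gcongr
    exact hb t ht
  have hI : ∀ j : ℕ, Integrable (fun t => C * (t ^ k * Real.exp (-(2 * π * (j + 1) * t))))
      (volume.restrict (Set.Ioi (0:ℝ))) :=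
    fun j => (aux_pow_exp_integrable k (hC j)).const_mul C
  have hint : ∀ j : ℕ, Integrable
      (fun t => (-1 : ℝ) ^ j * (f t * Real.exp (-(2 * π * (j + 1) * t))))
      (volume.restrict (Set.Ioi (0:ℝ))) := by
    intro j
    refine (hI j).mono' ?_ (hbd j)
    exact Continuous.aestronglyMeasurable (by fun_prop)
  have hsum : Summable fun j : ℕ => ∫ t in Set.Ioi (0:ℝ),
      ‖(-1 : ℝ) ^ j * (f t * Real.exp (-(2 * π * (j + 1) * t)))‖ := by
    have hs : Summable (fun j : ℕ => C * ((k.factorial : ℝ) / (2 * π) ^ (k + 1) *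
        (1 / ((j + 1 : ℕ) : ℝ) ^ (k + 1)))) := by
      refine Summable.mul_left _ (Summable.mul_left _ ?_)
      exact (summable_nat_add_iff 1 (f := fun n : ℕ => 1 / (n : ℝ) ^ (k + 1))).mpr
        (Real.summable_one_div_nat_pow.mpr (by omega))
    refine Summable.of_nonneg_of_le (fun j => integral_nonneg fun t => norm_nonneg _) ?_ hs
    intro j
    refine (integral_mono_ae (hint j).norm (hI j) (hbd j)).trans (le_of_eq ?_)
    rw [integral_const_mul, aux_pow_exp_int k (hC j), mul_pow]
    push_cast
    field_simp
  have h := hasSum_integral_of_summable_integral_norm hint hsum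
  simp only [integral_const_mul] at h
  convert! h using 1
  refine setIntegral_congr_fun measurableSet_Ioi fun t ht => ?_
  have := (wgt_hasSum (t := t) ht).mul_left (f t)
  rw [← this.tsum_eq]
  refine tsum_congr fun j => ?_
  ring

lemma wgt_moment (k : ℕ) (hk : 1 ≤ k) :
    ∫ t in Set.Ioi (0:ℝ), t ^ (2 * k - 1) * wgt t =
      (-1) ^ k * (((Polynomial.bernoulli (2 * k)).eval ((1 : ℚ) / 2) : ℚ) : ℝ) / (4 * k) := by
  have h1 := wgt_series (fun t => t ^ (2 * k - 1)) (by fun_prop) (2 * k - 1) 1 (by omega)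
    (fun t ht => by rw [one_mul, abs_of_pos (by positivity)])
  have h2 := hasSum_one_div_nat_pow_mul_cos (k := k) (by omega) (x := 1 / 2)
    (by constructor <;> norm_num)
  rw [hasSum_nat_add_iff' 1 |>.symm] at h2
  have h3 := h2.mul_left (-((2 * k - 1).factorial : ℝ) / (2 * π) ^ (2 * k))
  have he : (Polynomial.map (algebraMap ℚ ℝ) (Polynomial.bernoulli (2 * k))).eval (1 / 2 : ℝ) =
      (((Polynomial.bernoulli (2 * k)).eval ((1 : ℚ) / 2) : ℚ) : ℝ) := by
    have := Polynomial.eval_map_apply (p := Polynomial.bernoulli (2 * k)) (f := algebraMap ℚ ℝ)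
      (x := (1:ℚ)/2)
    simpa using this
  rw [he] at h3
  have hcongr : (fun j : ℕ => (-1 : ℝ) ^ j *
      ∫ t in Set.Ioi (0:ℝ), t ^ (2 * k - 1) * Real.exp (-(2 * π * (j + 1) * t))) =
      fun j : ℕ => (-((2 * k - 1).factorial : ℝ) / (2 * π) ^ (2 * k)) *
        (1 / ((j + 1 : ℕ) : ℝ) ^ (2 * k) * Real.cos (2 * π * ((j + 1 : ℕ) : ℝ) * (1 / 2))) := by
    ext j
    rw [aux_pow_exp_int _ (by positivity), show 2 * k - 1 + 1 = 2 * k by omega,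
      show 2 * π * ((j + 1 : ℕ) : ℝ) * (1 / 2) = ((j + 1 : ℕ) : ℝ) * π by ring,
      Real.cos_nat_mul_pi, mul_pow, pow_succ]
    push_cast
    field_simp
  rw [hcongr] at h1
  rw [h1.unique h3]
  have hf : ((2 * k).factorial : ℝ) = 2 * k * (2 * k - 1).factorial := by
    rw [← Nat.mul_factorial_pred (n := 2 * k) (by omega)]; push_cast; ring
  have hk0 : (k : ℝ) ≠ 0 := by positivity
  have : ((2 * k - 1).factorial : ℝ) ≠ 0 := by positivity
  rw [hf]
  simp only [sum_range_one, Nat.cast_zero]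
  rw [zero_pow (by omega)]
  simp only [div_zero, zero_mul, sub_zero, pow_succ]
  field_simp
  ring

lemma sin_exp_int (s a : ℝ) (ha : 0 < a) :
    ∫ t in Set.Ioi (0:ℝ), Real.sin (s * t) * Real.exp (-(a * t)) = s / (s ^ 2 + a ^ 2) := by
  have hre : ((-a : ℂ) + s * Complex.I).re < 0 := by simpa using ha
  have h := integral_exp_mul_complex_Ioi hre 0
  have hi := integrableOn_exp_mul_complex_Ioi hre 0
  have him := integral_im (𝕜 := ℂ) hi
  rw [h] at him
  have e : ∀ t : ℝ, RCLike.im (Complex.exp (((-a : ℂ) + s * Complex.I) * t)) =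
      Real.sin (s * t) * Real.exp (-(a * t)) := by
    intro t
    rw [RCLike.im_to_complex, Complex.exp_im]
    simp [mul_comm]
  simp only [e] at him
  rw [him]
  have hne : s ^ 2 + a ^ 2 ≠ 0 := by positivity
  simp [Complex.div_im, Complex.normSq_apply]
  field_simp
  ring

lemma exp_sin_integrable (s a : ℝ) (ha : 0 < a) :
    IntegrableOn (fun t => Real.sin (s * t) * Real.exp (-(a * t))) (Set.Ioi (0:ℝ)) := by
  have h := aux_pow_exp_integrable 0 ha
  simp only [pow_zero, one_mul] at h
  refine h.bdd_mul (c := 1) (Continuous.aestronglyMeasurable (by fun_prop)) ?_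
  exact Eventually.of_forall fun t => Real.abs_sin_le_one _

lemma coth_series {y : ℝ} (hy : 0 < y) :
    HasSum (fun n : ℕ => 2 * y / (y ^ 2 + ((n:ℝ) + 1) ^ 2))
      (π * (Real.cosh (π * y) / Real.sinh (π * y)) - 1 / y) := by
  have hmem : (Complex.I * y : ℂ) ∈ Complex.integerComplement := by
    refine UpperHalfPlane.coe_mem_integerComplement ⟨Complex.I * y, ?_⟩
    simpa using hy
  have h1 := (summable_cotTerm hmem).hasSum
  have h2 := cot_series_rep' hmem
  unfold cotTerm at h1
  rw [← h2] at h1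
  have h3 := h1.mul_left Complex.I
  rw [← Complex.hasSum_ofReal]
  have hy0 : (y : ℂ) ≠ 0 := by exact_mod_cast hy.ne'
  convert! h3 using 1
  · ext n
    have hne : ((y : ℂ) ^ 2 + ((n:ℂ) + 1) ^ 2) ≠ 0 := by
      have : (y ^ 2 + ((n:ℝ) + 1) ^ 2) ≠ 0 := by positivity
      exact_mod_cast this
    have hm : (Complex.I * y - ((n:ℂ) + 1)) * (Complex.I * y + (n + 1)) =
        -((y : ℂ) ^ 2 + ((n:ℂ) + 1) ^ 2) := by
      linear_combination (y:ℂ) ^ 2 * Complex.I_sq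
    have hp := neg_ne_zero.mpr hne
    rw [← hm] at hp
    have ha := left_ne_zero_of_mul hp
    have hb := right_ne_zero_of_mul hp
    rw [div_add_div _ _ ha hb, hm]
    push_cast
    field_simp
    linear_combination (2 * (y:ℂ)) * Complex.I_sq
  · have hs : (Complex.sinh (π * y) : ℂ) ≠ 0 := by
      have : Real.sinh (π * y) ≠ 0 := by
        have : 0 < Real.sinh (π * y) := Real.sinh_pos_iff.mpr (by positivity)
        exact this.ne'
      exact_mod_cast this
    rw [Complex.cot, show (π : ℂ) * (Complex.I * y) = (π * y) * Complex.I by ring,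
      Complex.cos_mul_I, Complex.sin_mul_I]
    push_cast
    have := Complex.I_ne_zero
    field_simp

lemma sinh_series {s : ℝ} (hs : 0 < s) :
    HasSum (fun n : ℕ => (-1 : ℝ) ^ n * (2 * (s / (s ^ 2 + (2 * π * (n + 1)) ^ 2))))
      (1 / s - 1 / (2 * Real.sinh (s / 2))) := by
  have hpi := Real.pi_pos
  have hA := (coth_series (y := s / (2 * π)) (by positivity)).mul_left (1 / (2 * π))
  have hB := (coth_series (y := s / (4 * π)) (by positivity)).mul_left (1 / (4 * π))
  have hodd : HasSum (fun n : ℕ => if Even n then (0:ℝ) else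
      2 * (s / (s ^ 2 + (2 * π * (n + 1)) ^ 2)))
      (0 + 1 / (4 * π) * (π * (Real.cosh (π * (s / (4 * π))) / Real.sinh (π * (s / (4 * π))))
        - 1 / (s / (4 * π)))) := by
    refine HasSum.even_add_odd (by simp) ?_
    convert! hB using 1
    ext n
    rw [if_neg (by simp)]
    push_cast
    field_simp
    ring
  have h := hA.sub (hodd.mul_left 2)
  convert! h using 1
  · ext n
    rcases Nat.even_or_odd n with hn | hn
    · rw [if_pos hn, hn.neg_one_pow]
      field_simp
      ring
    · rw [if_neg (by simpa using hn), hn.neg_one_pow]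
      field_simp
      ring
  · have e1 : π * (s / (2 * π)) = 2 * (s / 4) := by field_simp; norm_num
    have e2 : π * (s / (4 * π)) = s / 4 := by field_simp
    have e3 : s / 2 = 2 * (s / 4) := by ring
    rw [e1, e2, e3, Real.cosh_two_mul, Real.sinh_two_mul]
    have hsh : 0 < Real.sinh (s / 4) := Real.sinh_pos_iff.mpr (by positivity)
    have hch : 0 < Real.cosh (s / 4) := Real.cosh_pos _
    have hid := Real.cosh_sq (s / 4)
    generalize Real.sinh (s / 4) = S at *
    generalize Real.cosh (s / 4) = C at *
    have : S ^ 2 = C ^ 2 - 1 := by linarith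
    field_simp
    rw [this]
    ring

lemma sin_transform {s : ℝ} (hs : 0 < s) :
    2 * ∫ t in Set.Ioi (0:ℝ), Real.sin (s * t) * wgt t = 1 / s - 1 / (2 * Real.sinh (s / 2)) := by
  have h := wgt_series (fun t => Real.sin (s * t)) (by fun_prop) 1 s le_rfl (fun t ht => by
    rw [pow_one]
    exact (Real.abs_sin_le_abs).trans (le_of_eq (abs_of_pos (by positivity))))
  refine (h.mul_left 2).unique ?_
  convert! sinh_series hs using 1
  ext n
  rw [sin_exp_int _ _ (by positivity)]
  ring

noncomputable def binetF (x : ℝ) : ℝ := ∫ t in Set.Ioi (0:ℝ), 2 * t * wgt t * (1 / (x ^ 2 + t ^ 2))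

noncomputable def kerG (s : ℝ) : ℝ := 1 / s - 1 / (2 * Real.sinh (s / 2))

lemma binet_prod_integrable {x : ℝ} (hx : 0 < x) :
    Integrable (fun z : ℝ × ℝ => Real.sin (z.1 * z.2) * (Real.exp (-(x * z.1)) * (2 * wgt z.2)))
      ((volume.restrict (Set.Ioi (0:ℝ))).prod (volume.restrict (Set.Ioi (0:ℝ)))) := by
  have h1 := aux_pow_exp_integrable 0 hx
  have h2 := wgt_pow_integrable 0
  simp only [pow_zero, one_mul] at h1 h2
  have h := Integrable.mul_prod h1 (h2.const_mul 2)
  refine h.bdd_mul (c := 1) (Continuous.aestronglyMeasurable (by fun_prop)) ?_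
  exact Eventually.of_forall fun t => Real.abs_sin_le_one _

lemma kerG_inner {x s : ℝ} (hs : 0 < s) :
    ∫ t in Set.Ioi (0:ℝ), Real.sin (s * t) * (Real.exp (-(x * s)) * (2 * wgt t)) =
      Real.exp (-(x * s)) * kerG s := by
  unfold kerG
  rw [← sin_transform hs, ← integral_const_mul, ← integral_const_mul]
  congr 1; ext t; ring

lemma kerG_integrable {x : ℝ} (hx : 0 < x) :
    IntegrableOn (fun s => Real.exp (-(x * s)) * kerG s) (Set.Ioi (0:ℝ)) := by
  have h := (binet_prod_integrable hx).integral_prod_left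
  refine h.congr ?_
  filter_upwards [ae_restrict_mem measurableSet_Ioi] with s hs
  exact kerG_inner hs

lemma binetF_eq {x : ℝ} (hx : 0 < x) :
    binetF x = ∫ s in Set.Ioi (0:ℝ), Real.exp (-(x * s)) * kerG s := by
  have h := integral_integral_swap
    (f := fun s t => Real.sin (s * t) * (Real.exp (-(x * s)) * (2 * wgt t)))
    (binet_prod_integrable hx)
  rw [setIntegral_congr_fun measurableSet_Ioi (fun s hs => kerG_inner (x := x) hs)] at h
  rw [h]
  unfold binetF
  congr 1; ext t
  have : ∀ s, Real.sin (s * t) * (Real.exp (-(x * s)) * (2 * wgt t)) =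
    (2 * wgt t) * (Real.sin (t * s) * Real.exp (-(x * s))) := fun s => by rw [mul_comm s t]; ring
  simp only [this]
  rw [integral_const_mul, sin_exp_int _ _ hx]
  ring

lemma frullani_exp {a b : ℝ} (ha : 0 < a) (hab : a < b) :
    IntegrableOn (fun s => s⁻¹ * (Real.exp (-(a * s)) - Real.exp (-(b * s)))) (Set.Ioi (0:ℝ)) ∧
    ∫ s in Set.Ioi (0:ℝ), s⁻¹ * (Real.exp (-(a * s)) - Real.exp (-(b * s))) = Real.log (b / a) := by
  have hint : IntegrableOn (fun s => s⁻¹ * (Real.exp (-(a * s)) - Real.exp (-(b * s))))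
      (Set.Ioi (0:ℝ)) := by
    have h1 := (aux_pow_exp_integrable 0 ha).const_mul (b - a)
    refine h1.mono' ?_ ?_
    · exact Measurable.aestronglyMeasurable (by fun_prop)
    · filter_upwards [ae_restrict_mem measurableSet_Ioi] with s hs
      have hs : 0 < s := hs
      have e : Real.exp (-(b * s)) = Real.exp (-(a * s)) * Real.exp (-((b - a) * s)) := by
        rw [← Real.exp_add]; congr 1; ring
      have h2 := Real.add_one_le_exp (-((b - a) * s))
      have h3 : Real.exp (-(b * s)) ≤ Real.exp (-(a * s)) := by
        apply Real.exp_le_exp.mpr; nlinarith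
      rw [Real.norm_of_nonneg (mul_nonneg (by positivity) (by linarith)), inv_mul_le_iff₀ hs, e]
      have := Real.exp_pos (-(a * s))
      nlinarith
  refine ⟨hint, ?_⟩
  have h := Frullani.integral_Ioi_eq (f := fun s : ℝ => Real.exp (-s)) (a := a) (b := b)
    (L := 1) (R := 0) ?_ ha (ha.trans hab) ?_ ?_ ?_
  · simpa using h
  · exact (Continuous.locallyIntegrable (by fun_prop)).locallyIntegrableOn _
  · have : Continuous fun s : ℝ => Real.exp (-s) := by fun_prop
    have h0 := this.tendsto 0
    simp only [neg_zero, Real.exp_zero] at h0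
    exact h0.mono_left nhdsWithin_le_nhds
  · exact Real.tendsto_exp_neg_atTop_nhds_zero
  · simpa using hint

lemma binetF_diff {x : ℝ} (hx : 0 < x) :
    binetF x - binetF (x + 1) = Real.log ((x + 1) / x) - 1 / (x + 1 / 2) := by
  obtain ⟨hi, hf⟩ := frullani_exp hx (lt_add_one x)
  have hx2 : 0 < x + 1 / 2 := by positivity
  have he := aux_pow_exp_int 0 hx2
  have hei := aux_pow_exp_integrable 0 hx2
  simp only [pow_zero, one_mul, Nat.factorial_zero, Nat.cast_one, zero_add, pow_one] at he hei
  rw [binetF_eq hx, binetF_eq (by positivity), ← integral_sub (kerG_integrable hx)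
    (kerG_integrable (by positivity)), ← hf, ← he, ← integral_sub hi hei]
  refine setIntegral_congr_fun measurableSet_Ioi fun s hs => ?_
  have hs : 0 < s := hs
  have hsh : 0 < Real.sinh (s / 2) := Real.sinh_pos_iff.mpr (by positivity)
  have e1 : Real.exp (-(x * s)) = Real.exp (-((x + 1 / 2) * s)) * Real.exp (s / 2) := by
    rw [← Real.exp_add]; congr 1; ring
  have e2 : Real.exp (-((x + 1) * s)) = Real.exp (-((x + 1 / 2) * s)) * Real.exp (-(s / 2)) := by
    rw [← Real.exp_add]; congr 1; ring
  have e3 : Real.exp (s / 2) = 2 * Real.sinh (s / 2) + Real.exp (-(s / 2)) := by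
    rw [Real.sinh_eq]; ring
  simp only [kerG]
  rw [e1, e2, e3]
  field_simp
  ring

lemma binetF_bound {x : ℝ} (hx : 0 < x) :
    0 ≤ binetF x ∧ binetF x ≤ (∫ t in Set.Ioi (0:ℝ), 2 * (t ^ 1 * wgt t)) * (1 / x ^ 2) := by
  constructor
  · refine setIntegral_nonneg measurableSet_Ioi fun t ht => ?_
    have ht : 0 < t := ht
    have := wgt_pos t
    positivity
  · rw [← integral_mul_const]
    unfold binetF
    refine integral_mono_of_nonneg ?_ (((wgt_pow_integrable 1).const_mul 2).mul_const _) ?_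
    · filter_upwards [ae_restrict_mem measurableSet_Ioi] with t ht
      have ht : 0 < t := ht
      have := wgt_pos t
      simp only [Pi.zero_apply]
      positivity
    · filter_upwards [ae_restrict_mem measurableSet_Ioi] with t ht
      have ht : 0 < t := ht
      have := wgt_pos t
      rw [pow_one, ← mul_assoc]
      gcongr
      nlinarith [sq_nonneg t]

lemma binetF_tendsto : Tendsto (fun n : ℕ => binetF (n + 1 / 2)) atTop (𝓝 0) := by
  have h1 : Tendsto (fun n : ℕ => ((n:ℝ) + 1 / 2)) atTop atTop :=
    tendsto_atTop_add_const_right _ _ tendsto_natCast_atTop_atTop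
  have h2 : Tendsto (fun n : ℕ => 1 / ((n:ℝ) + 1 / 2) ^ 2) atTop (𝓝 0) := by
    simp only [one_div]
    exact (((tendsto_pow_atTop (two_ne_zero)).comp (by simpa using h1)).inv_tendsto_atTop)
  have h3 := h2.const_mul (∫ t in Set.Ioi (0:ℝ), 2 * (t ^ 1 * wgt t))
  rw [mul_zero] at h3
  exact tendsto_of_tendsto_of_tendsto_of_le_of_le tendsto_const_nhds h3
    (fun n => (binetF_bound (by positivity)).1) (fun n => (binetF_bound (by positivity)).2)

lemma harmonic_binet (n : ℕ) : (harmonic n : ℝ) =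
    Real.eulerMascheroniConstant + Real.log (n + 1 / 2) + binetF (n + 1 / 2) := by
  set E : ℕ → ℝ := fun n => (harmonic n : ℝ) - Real.log (n + 1 / 2) - binetF (n + 1 / 2) with hE
  have hstep : ∀ n, E (n + 1) = E n := by
    intro n
    have h := binetF_diff (x := (n:ℝ) + 1 / 2) (by positivity)
    rw [Real.log_div (by positivity) (by positivity)] at h
    simp only [hE, harmonic_succ]
    push_cast
    rw [show (n:ℝ) + 1 + 1 / 2 = n + 1 / 2 + 1 by ring]
    rw [show (n:ℝ) + 1 / 2 + 1 / 2 = n + 1 by ring, one_div ((n:ℝ) + 1)] at h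
    linarith
  have hconst : ∀ n, E n = E 0 := fun n => by
    induction n with
    | zero => rfl
    | succ k ih => rw [hstep, ih]
  have hlog : Tendsto (fun n : ℕ => Real.log (n + 1 / 2) - Real.log n) atTop (𝓝 0) := by
    have h1 := Real.tendsto_log_comp_add_sub_log (1 / 2)
    exact h1.comp tendsto_natCast_atTop_atTop
  have hlim : Tendsto E atTop (𝓝 Real.eulerMascheroniConstant) := by
    have h := (Real.tendsto_harmonic_sub_log.sub hlog).sub binetF_tendsto
    simp only [sub_zero] at h
    refine h.congr fun n => ?_
    simp only [hE]; ring
  have h0 : E n = Real.eulerMascheroniConstant := by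
    refine tendsto_nhds_unique (tendsto_const_nhds.congr fun k => ?_) hlim
    rw [hconst n, hconst k]
  simp only [hE] at h0
  linarith

lemma integral_pos_aux {α : Type*} [MeasurableSpace α] {μ : Measure α} (hμ : μ ≠ 0) {f : α → ℝ}
    (hf : Integrable f μ) (hp : ∀ᵐ t ∂μ, 0 < f t) : 0 < ∫ t, f t ∂μ := by
  rw [integral_pos_iff_support_of_nonneg_ae (hp.mono fun t h => h.le) hf, pos_iff_ne_zero]
  intro h0
  apply hμ
  rw [← Measure.measure_univ_eq_zero]
  have h1 : ∀ᵐ t ∂μ, t ∉ Function.support f := by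
    exact measure_eq_zero_iff_ae_notMem.mp h0
  have h2 : ∀ᵐ t ∂μ, False := by
    filter_upwards [h1, hp] with t h1 h2
    exact h1 h2.ne'
  simpa [ae_iff] using h2

lemma geom_rem (M c : ℝ) (hM : 0 < M) (hc : 0 < c) (r : ℕ) :
    1 / (M + c) = ∑ q ∈ Finset.range r, (-1 : ℝ) ^ q * c ^ q / M ^ (q + 1) +
      (-1) ^ r * (c ^ r * (M / (M + c))) / M ^ (r + 1) := by
  induction r with
  | zero => simp; field_simp
  | succ k ih =>
    rw [ih, Finset.sum_range_succ, add_assoc]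
    congr 1
    field_simp
    ring

lemma stieltjes_rem {α : Type*} [MeasurableSpace α] {μ : Measure α} (hμ : μ ≠ 0) (g c : α → ℝ)
    (hc : Measurable c) (hpos : ∀ᵐ t ∂μ, 0 < g t ∧ 0 < c t)
    (hint : ∀ k : ℕ, Integrable (fun t => g t * c t ^ k) μ) {M : ℝ} (hM : 0 < M) (r : ℕ) :
    ∃ ρ : ℝ, 0 < ρ ∧ ρ < 1 ∧ ∫ t, g t * (1 / (M + c t)) ∂μ =
      ∑ q ∈ Finset.range r, (-1 : ℝ) ^ q * (∫ t, g t * c t ^ q ∂μ) / M ^ (q + 1) +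
      ρ * ((-1) ^ r * (∫ t, g t * c t ^ r ∂μ) / M ^ (r + 1)) := by
  have hJi : Integrable (fun t => (g t * c t ^ r) * (M / (M + c t))) μ := by
    refine (hint r).mul_bdd (c := 1) ?_ ?_
    · exact Measurable.aestronglyMeasurable (by fun_prop)
    · filter_upwards [hpos] with t ht
      have := ht.2
      rw [Real.norm_of_nonneg (by positivity), div_le_one (by positivity)]
      linarith
  have hK : 0 < ∫ t, g t * c t ^ r ∂μ := by
    refine integral_pos_aux hμ (hint r) ?_
    filter_upwards [hpos] with t ht
    have := ht.2; have := ht.1; positivity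
  have hJ : 0 < ∫ t, (g t * c t ^ r) * (M / (M + c t)) ∂μ := by
    refine integral_pos_aux hμ hJi ?_
    filter_upwards [hpos] with t ht
    have := ht.2; have := ht.1; positivity
  have hJK : 0 < ∫ t, (g t * c t ^ r - (g t * c t ^ r) * (M / (M + c t))) ∂μ := by
    refine integral_pos_aux hμ ((hint r).sub hJi) ?_
    filter_upwards [hpos] with t ht
    have h2 := ht.2; have h1 := ht.1
    have h3 : M / (M + c t) < 1 := by rw [div_lt_one (by positivity)]; linarith
    have h4 : 0 < g t * c t ^ r := by positivity
    nlinarith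
  rw [integral_sub (hint r) hJi] at hJK
  refine ⟨(∫ t, (g t * c t ^ r) * (M / (M + c t)) ∂μ) / ∫ t, g t * c t ^ r ∂μ, by positivity, ?_, ?_⟩
  · rw [div_lt_one hK]; linarith
  · have e : ∫ t, g t * (1 / (M + c t)) ∂μ = ∫ t, (∑ q ∈ Finset.range r,
        ((-1 : ℝ) ^ q / M ^ (q + 1)) * (g t * c t ^ q) +
        ((-1) ^ r / M ^ (r + 1)) * ((g t * c t ^ r) * (M / (M + c t)))) ∂μ := by
      refine integral_congr_ae ?_
      filter_upwards [hpos] with t ht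
      rw [geom_rem M (c t) hM ht.2 r, mul_add, Finset.mul_sum]
      congr 1
      · refine Finset.sum_congr rfl fun q _ => ?_
        ring
      · ring
    rw [e, integral_add (integrable_finsetSum _ fun q _ => (hint q).const_mul _)
      (hJi.const_mul _), integral_finsetSum _ (fun q _ => (hint q).const_mul _)]
    simp only [integral_const_mul]
    congr 1
    · refine Finset.sum_congr rfl fun q _ => ?_
      ring
    · generalize (∫ t, (g t * c t ^ r) * (M / (M + c t)) ∂μ) = J
      generalize (∫ t, g t * c t ^ r ∂μ) = K at *
      field_simp

lemma wgt_c_integrable (q : ℕ) :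
    IntegrableOn (fun t => 2 * t * wgt t * (t ^ 2 + 1 / 4) ^ q) (Set.Ioi (0:ℝ)) ∧
    ∫ t in Set.Ioi (0:ℝ), 2 * t * wgt t * (t ^ 2 + 1 / 4) ^ q =
      ∑ j ∈ Finset.range (q + 1), 2 * (1 / 4 : ℝ) ^ (q - j) * q.choose j *
        ∫ t in Set.Ioi (0:ℝ), t ^ (2 * j + 1) * wgt t := by
  have e : (fun t => 2 * t * wgt t * (t ^ 2 + 1 / 4) ^ q) = fun t =>
      ∑ j ∈ Finset.range (q + 1), (2 * (1 / 4 : ℝ) ^ (q - j) * q.choose j) *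
        (t ^ (2 * j + 1) * wgt t) := by
    ext t
    rw [add_pow, Finset.mul_sum]
    refine Finset.sum_congr rfl fun j _ => ?_
    rw [← pow_mul]; ring
  have hi : ∀ j ∈ Finset.range (q + 1), Integrable (fun t =>
      (2 * (1 / 4 : ℝ) ^ (q - j) * q.choose j) * (t ^ (2 * j + 1) * wgt t))
      (volume.restrict (Set.Ioi (0:ℝ))) := fun j _ => (wgt_pow_integrable _).const_mul _
  rw [e]
  refine ⟨integrable_finsetSum _ hi, ?_⟩
  rw [integral_finsetSum _ hi]
  simp only [integral_const_mul]

lemma coeff_eq (q : ℕ) : ramanujanCoeff (q + 1) * 2 ^ (q + 1) =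
    (-1) ^ q * ((1 / 4 : ℝ) ^ (q + 1) / (2 * (q + 1)) +
      ∫ t in Set.Ioi (0:ℝ), 2 * t * wgt t * (t ^ 2 + 1 / 4) ^ q) := by
  rw [(wgt_c_integrable q).2]
  unfold ramanujanCoeff
  have hS : ∑ j ∈ Finset.range (q + 1), 2 * (1 / 4 : ℝ) ^ (q - j) * q.choose j *
        ∫ t in Set.Ioi (0:ℝ), t ^ (2 * j + 1) * wgt t =
      (1 / 4 : ℝ) ^ (q + 1) / (2 * (q + 1)) * ∑ k ∈ Finset.Icc 1 (q + 1),
      ((q + 1).choose k : ℝ) * (-4 : ℝ) ^ k *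
        (((Polynomial.bernoulli (2 * k)).eval ((1 : ℚ) / 2) : ℚ) : ℝ) := by
    rw [Finset.mul_sum, ← Finset.Ico_add_one_right_eq_Icc, Finset.sum_Ico_eq_sum_range]
    refine Finset.sum_congr (by simp) fun j hj => ?_
    have hj' : j ≤ q := by simpa [Nat.lt_succ_iff] using hj
    have hm := wgt_moment (1 + j) (by omega)
    rw [show 2 * (1 + j) - 1 = 2 * j + 1 by omega] at hm
    rw [hm]
    have hch : ((q : ℝ) + 1) * q.choose j = (q + 1).choose (1 + j) * (1 + j) := by
      rw [add_comm 1 j, add_comm 1 (j:ℝ)]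
      exact_mod_cast Nat.add_one_mul_choose_eq q j
    have h4 : (1 / 4 : ℝ) ^ (q + 1) * (-4) ^ (1 + j) = (1 / 4 : ℝ) ^ (q - j) * (-1) ^ (1 + j) := by
      obtain ⟨d, rfl⟩ := Nat.exists_eq_add_of_le hj'
      rw [show j + d - j = d by omega, show j + d + 1 = d + (1 + j) by ring, pow_add, mul_assoc,
        ← mul_pow]
      norm_num
    push_cast
    generalize (((Polynomial.bernoulli (2 * (1 + j))).eval ((1 : ℚ) / 2) : ℚ) : ℝ) = B
    have hne : (1 + (j:ℝ)) ≠ 0 := by positivity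
    have hne2 : ((q:ℝ) + 1) ≠ 0 := by positivity
    have : (q.choose j : ℝ) = (q + 1).choose (1 + j) * (1 + j) / (q + 1) := by
      rw [← hch]; field_simp
    rw [this]
    calc _ = ((1 / 4 : ℝ) ^ (q - j) * (-1) ^ (1 + j)) * ((q + 1).choose (1 + j) * B) /
          (2 * (q + 1)) := by field_simp; ring
      _ = _ := by rw [← h4]; ring
  rw [hS]
  push_cast
  rw [show (8:ℝ) = 2 * 4 by norm_num, mul_pow, one_div (4:ℝ), inv_pow]
  field_simp

lemma log_int (M : ℝ) (hM : 0 < M) :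
    ∫ u in Set.Ioc (0:ℝ) (1 / 4), (1 / 2 : ℝ) * (1 / (M + u)) =
      1 / 2 * Real.log (M + 1 / 4) - 1 / 2 * Real.log M := by
  rw [← intervalIntegral.integral_of_le (by norm_num)]
  rw [intervalIntegral.integral_const_mul,
    intervalIntegral.integral_comp_add_left (fun x => 1 / x) M,
    integral_one_div_of_pos (by linarith) (by linarith), add_zero,
    Real.log_div (by positivity) (by positivity)]
  ring

lemma pow_int (k : ℕ) :
    ∫ u in Set.Ioc (0:ℝ) (1 / 4), (1 / 2 : ℝ) * u ^ k = (1 / 4) ^ (k + 1) / (2 * (k + 1)) := by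
  rw [← intervalIntegral.integral_of_le (by norm_num), intervalIntegral.integral_const_mul,
    integral_pow, zero_pow (by omega)]
  field_simp
  ring

theorem ramanujan_expansion (n : ℕ) (hn : 0 < n) (r : ℕ) (hr : 1 ≤ r) :
    ∃ Θ : ℝ, 0 < Θ ∧ Θ < 1 ∧
      (harmonic n : ℝ) =
        (1 / 2) * Real.log (2 * ((n * (n + 1) : ℝ) / 2)) + Real.eulerMascheroniConstant +
          (∑ p ∈ Finset.Icc 1 r, ramanujanCoeff p / ((n * (n + 1) : ℝ) / 2) ^ p) +
          Θ * ramanujanCoeff (r + 1) / ((n * (n + 1) : ℝ) / 2) ^ (r + 1) := by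
  set M : ℝ := n * (n + 1) with hMdef
  have hM : 0 < M := by positivity
  set b : ℕ → ℝ := fun q => (1 / 4 : ℝ) ^ (q + 1) / (2 * (q + 1)) with hb
  set a : ℕ → ℝ := fun q => ∫ t in Set.Ioi (0:ℝ), 2 * t * wgt t * (t ^ 2 + 1 / 4) ^ q with ha
  have hcoef : ∀ q, ramanujanCoeff (q + 1) / (M / 2) ^ (q + 1) =
      (-1) ^ q * b q / M ^ (q + 1) + (-1) ^ q * a q / M ^ (q + 1) := by
    intro q
    have h := coeff_eq q
    rw [div_pow, div_div_eq_mul_div, h]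
    ring
  obtain ⟨ρ₁, h10, h11, h1⟩ := stieltjes_rem (μ := volume.restrict (Set.Ioc (0:ℝ) (1 / 4)))
    (by
      rw [Ne, Measure.restrict_eq_zero]; simp) (fun _ => (1 / 2 : ℝ)) (fun u => u) measurable_id
    (by
      filter_upwards [ae_restrict_mem measurableSet_Ioc] with t ht
      exact ⟨by norm_num, ht.1⟩)
    (fun k => (Continuous.integrableOn_Ioc (by fun_prop))) hM r
  obtain ⟨ρ₂, h20, h21, h2⟩ := stieltjes_rem (μ := volume.restrict (Set.Ioi (0:ℝ)))
    (by
      rw [Ne, Measure.restrict_eq_zero]; simp) (fun t => 2 * t * wgt t) (fun t => t ^ 2 + 1 / 4)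
    (by fun_prop)
    (by
      filter_upwards [ae_restrict_mem measurableSet_Ioi] with t ht
      have ht : 0 < t := ht
      have := wgt_pos t
      exact ⟨by positivity, by positivity⟩)
    (fun k => (wgt_c_integrable k).1) hM r
  simp only [pow_int] at h1
  rw [log_int M hM] at h1
  have hx : ((n:ℝ) + 1 / 2) ^ 2 = M + 1 / 4 := by rw [hMdef]; ring
  have hbin : binetF (n + 1 / 2) =
      ∫ t in Set.Ioi (0:ℝ), 2 * t * wgt t * (1 / (M + (t ^ 2 + 1 / 4))) := by
    unfold binetF
    rw [hx]
    congr 1; ext t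
    congr 2; ring
  have hlog : Real.log ((n:ℝ) + 1 / 2) = 1 / 2 * Real.log (M + 1 / 4) := by
    rw [← hx, Real.log_pow]; push_cast; ring
  have hbp : 0 < b r := by simp only [hb]; positivity
  have hap : 0 < a r := by
    refine integral_pos_aux (by rw [Ne, Measure.restrict_eq_zero]; simp) (wgt_c_integrable r).1 ?_
    filter_upwards [ae_restrict_mem measurableSet_Ioi] with t ht
    have ht : 0 < t := ht
    have := wgt_pos t
    positivity
  have hab : 0 < b r + a r := by positivity
  refine ⟨(ρ₁ * b r + ρ₂ * a r) / (b r + a r), by positivity, ?_, ?_⟩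
  · rw [div_lt_one hab]; nlinarith
  · rw [harmonic_binet n, hbin, h2, hlog, mul_div_assoc _ (ramanujanCoeff (r + 1)), hcoef r,
      ← Finset.Ico_add_one_right_eq_Icc, Finset.sum_Ico_eq_sum_range, add_tsub_cancel_right]
    simp only [add_comm 1, hcoef, Finset.sum_add_distrib]
    rw [show 2 * (M / 2) = M by ring]
    have hfin : (ρ₁ * b r + ρ₂ * a r) / (b r + a r) *
        ((-1) ^ r * b r / M ^ (r + 1) + (-1) ^ r * a r / M ^ (r + 1)) =
        ρ₁ * ((-1) ^ r * b r / M ^ (r + 1)) + ρ₂ * ((-1) ^ r * a r / M ^ (r + 1)) := by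
      field_simp
    rw [hfin]
    simp only [hb, ha]
    linarith
end

section
/- For every positive integer n, define Λ_n by H_n = (1/2)·ln(2m) + γ + 1/(12m + Λ_n), where m := n(n+1)/2. Then Λ_n = 6/5 − 19/(175·m) + 13/(250·m^2) − δ_n/m^3 for some δ_n with 0 < δ_n < 187969/4042500. -/
open Real

namespace Lodge

/-- the common polynomial denominator -/
noncomputable def Q (d m : ℝ) : ℝ :=
  12 * m ^ 4 + 6 / 5 * m ^ 3 - 19 / 175 * m ^ 2 + 13 / 250 * m - d

lemma Q_ge (d m : ℝ) (hm : 1 ≤ m) (hd : d ≤ 1) : m ^ 4 ≤ Q d m := by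
  unfold Q
  have h2 : 1 ≤ m ^ 2 := by nlinarith
  have h3 : 0 ≤ m ^ 3 := by positivity
  have h4 : m ^ 2 ≤ m ^ 4 := by nlinarith
  nlinarith

lemma Q_pos (d m : ℝ) (hm : 1 ≤ m) (hd : d ≤ 1) : 0 < Q d m :=
  lt_of_lt_of_le (by positivity) (Q_ge d m hm hd)

lemma ser_lower (y : ℝ) (h0 : 0 < y) (h1 : y < 1) :
    y ^ 3 / 3 + y ^ 5 / 5 + y ^ 7 / 7 + y ^ 9 / 9 + y ^ 11 / 11 ≤
      (1 / 2) * (log (1 + y) - log (1 - y)) - y := by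
  have h := hasSum_log_sub_log_of_abs_lt_one (x := y) (by rw [abs_of_pos h0]; exact h1)
  have := sum_le_hasSum (Finset.range 6) (fun i _ => by positivity) h
  simp only [Finset.sum_range_succ, Finset.sum_range_zero] at this
  norm_num at this
  linarith

lemma ser_upper (y : ℝ) (h0 : 0 < y) (h1 : y < 1) :
    (1 / 2) * (log (1 + y) - log (1 - y)) - y ≤
    y ^ 3 / 3 + y ^ 5 / 5 + y ^ 7 / 7 + y ^ 9 / 9 + y ^ 11 / 11 + y ^ 13 / 13
      + y ^ 15 / 15 * (1 - y ^ 2)⁻¹ := by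
  have h := hasSum_log_sub_log_of_abs_lt_one (x := y) (by rw [abs_of_pos h0]; exact h1)
  have h' := (hasSum_nat_add_iff' 7).mpr h
  have hg := (hasSum_geometric_of_lt_one (r := y ^ 2) (by positivity) (by nlinarith)).mul_left
    (2 / 15 * y ^ 15)
  have := hasSum_le (fun k => ?_) h' hg
  · simp only [Finset.sum_range_succ, Finset.sum_range_zero] at this
    norm_num at this
    linarith
  · have e : y ^ (2 * (k + 7) + 1) = y ^ 15 * (y ^ 2) ^ k := by
      rw [← pow_mul, ← pow_add]; congr 1; ring
    rw [e, ← mul_assoc]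
    have : (1 : ℝ) / (2 * ((k + 7 : ℕ) : ℝ) + 1) ≤ 1 / 15 := by
      apply one_div_le_one_div_of_le (by norm_num)
      push_cast
      have : (0 : ℝ) ≤ k := by positivity
      linarith
    gcongr
    linarith

lemma rat_lower (t : ℝ) (ht : 0 ≤ t) (a b y : ℝ) (ha : a = (t + 1) * (t + 2) / 2)
    (hb : b = (t + 2) * (t + 3) / 2) (hy : y = 1 / (t + 2)) :
    a ^ 3 / Q 0 a - b ^ 3 / Q 0 b <
      y ^ 3 / 3 + y ^ 5 / 5 + y ^ 7 / 7 + y ^ 9 / 9 + y ^ 11 / 11 := by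
  have hQa : 0 < Q 0 a := Q_pos _ _ (by rw [ha]; nlinarith) (by norm_num)
  have hQb : 0 < Q 0 b := Q_pos _ _ (by rw [hb]; nlinarith) (by norm_num)
  have hx : 0 < t + 2 := by linarith
  have e : y ^ 3 / 3 + y ^ 5 / 5 + y ^ 7 / 7 + y ^ 9 / 9 + y ^ 11 / 11 =
      ((t + 2) ^ 8 / 3 + (t + 2) ^ 6 / 5 + (t + 2) ^ 4 / 7 + (t + 2) ^ 2 / 9 + 1 / 11)
        / (t + 2) ^ 11 := by
    rw [hy]; field_simp
  rw [e, div_sub_div _ _ hQa.ne' hQb.ne', div_lt_div_iff₀ (by positivity) (by positivity),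
    ← sub_pos]
  unfold Q
  rw [ha, hb]
  ring_nf
  positivity

lemma rat_upper (t : ℝ) (ht : 0 ≤ t) (a b y c : ℝ) (ha : a = (t + 1) * (t + 2) / 2)
    (hb : b = (t + 2) * (t + 3) / 2) (hy : y = 1 / (t + 2)) (hc : c = 187969 / 4042500) :
    y ^ 3 / 3 + y ^ 5 / 5 + y ^ 7 / 7 + y ^ 9 / 9 + y ^ 11 / 11 + y ^ 13 / 13
      + y ^ 15 / 15 * (1 - y ^ 2)⁻¹ < a ^ 3 / Q c a - b ^ 3 / Q c b := by
  have hQa : 0 < Q c a := Q_pos _ _ (by rw [ha]; nlinarith) (by rw [hc]; norm_num)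
  have hQb : 0 < Q c b := Q_pos _ _ (by rw [hb]; nlinarith) (by rw [hc]; norm_num)
  have hx : 0 < t + 2 := by linarith
  have hx1 : 0 < (t + 1) * (t + 3) := by positivity
  have e1 : (1 - y ^ 2)⁻¹ = (t + 2) ^ 2 / ((t + 1) * (t + 3)) := by
    have : 1 - y ^ 2 = ((t + 1) * (t + 3)) / (t + 2) ^ 2 := by
      rw [hy]; field_simp; ring
    rw [this, inv_div]
  have e : y ^ 3 / 3 + y ^ 5 / 5 + y ^ 7 / 7 + y ^ 9 / 9 + y ^ 11 / 11 + y ^ 13 / 13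
      + y ^ 15 / 15 * (1 - y ^ 2)⁻¹ =
      (((t + 2) ^ 10 / 3 + (t + 2) ^ 8 / 5 + (t + 2) ^ 6 / 7 + (t + 2) ^ 4 / 9
        + (t + 2) ^ 2 / 11 + 1 / 13) * ((t + 1) * (t + 3)) + 1 / 15)
        / ((t + 2) ^ 13 * ((t + 1) * (t + 3))) := by
    rw [e1, hy]; field_simp
  rw [e, div_sub_div _ _ hQa.ne' hQb.ne', div_lt_div_iff₀ (by positivity) (by positivity),
    ← sub_pos]
  unfold Q
  rw [ha, hb, hc]
  ring_nf
  positivity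

/-- the triangular number -/
noncomputable def M (n : ℕ) : ℝ := (n * (n + 1) : ℝ) / 2

/-- the error term -/
noncomputable def err (n : ℕ) : ℝ :=
  (harmonic n : ℝ) - ((1 / 2) * Real.log (2 * ((n * (n + 1) : ℝ) / 2)) +
    Real.eulerMascheroniConstant)

lemma M_ge (n : ℕ) (hn : 1 ≤ n) : (n : ℝ) ≤ M n := by
  have : (1 : ℝ) ≤ n := by exact_mod_cast hn
  unfold M; nlinarith

lemma err_eq (n : ℕ) (hn : 1 ≤ n) : err n =
    (1 / 2) * (eulerMascheroniSeq n + eulerMascheroniSeq' n) - eulerMascheroniConstant := by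
  have : (1 : ℝ) ≤ n := by exact_mod_cast hn
  have h2 : (2 * ((n * (n + 1) : ℝ) / 2)) = n * (n + 1) := by ring
  unfold err eulerMascheroniSeq eulerMascheroniSeq'
  rw [if_neg (by omega), h2, log_mul (by positivity) (by positivity)]
  ring

lemma err_tendsto : Filter.Tendsto err Filter.atTop (nhds 0) := by
  have h := ((tendsto_eulerMascheroniSeq.add tendsto_eulerMascheroniSeq').const_mul
    (1 / 2)).sub_const eulerMascheroniConstant
  have h0 : (1 / 2) * (eulerMascheroniConstant + eulerMascheroniConstant)
    - eulerMascheroniConstant = 0 := by ring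
  rw [h0] at h
  refine h.congr' ?_
  filter_upwards [Filter.eventually_ge_atTop 1] with n hn
  exact (err_eq n hn).symm

lemma err_step (n : ℕ) (hn : 1 ≤ n) (y : ℝ) (hy : y = 1 / ((n : ℝ) + 1)) :
    err n - err (n + 1) = (1 / 2) * (log (1 + y) - log (1 - y)) - y := by
  have h1 : (1 : ℝ) ≤ n := by exact_mod_cast hn
  have e1 : 1 + y = ((n : ℝ) + 2) / (n + 1) := by rw [hy]; field_simp; ring
  have e2 : 1 - y = (n : ℝ) / (n + 1) := by rw [hy]; field_simp; ring
  rw [e1, e2, log_div (by positivity) (by positivity), log_div (by positivity) (by positivity)]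
  unfold err
  have h2 : (2 * ((n * (n + 1) : ℝ) / 2)) = n * (n + 1) := by ring
  have h3 : (2 * ((((n + 1 : ℕ) : ℝ) * (((n + 1 : ℕ) : ℝ) + 1) : ℝ) / 2))
    = (n + 1) * (n + 2) := by push_cast; ring
  rw [h2, h3, log_mul (by positivity) (by positivity), log_mul (by positivity) (by positivity),
    harmonic_succ, hy]
  push_cast
  ring

lemma R_tendsto (d : ℝ) (hd : d ≤ 1) :
    Filter.Tendsto (fun n => M n ^ 3 / Q d (M n)) Filter.atTop (nhds 0) := by
  refine tendsto_of_tendsto_of_tendsto_of_le_of_le' tendsto_const_nhds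
    tendsto_one_div_atTop_nhds_zero_nat ?_ ?_
  · filter_upwards [Filter.eventually_ge_atTop 1] with n hn
    have h1 : (1 : ℝ) ≤ n := by exact_mod_cast hn
    have h2 := M_ge n hn
    have := Q_pos d (M n) (by linarith) hd
    have : 0 < M n := by linarith
    positivity
  · filter_upwards [Filter.eventually_ge_atTop 1] with n hn
    have h1 : (1 : ℝ) ≤ n := by exact_mod_cast hn
    have h2 := M_ge n hn
    have hp := Q_pos d (M n) (by linarith) hd
    have hq := Q_ge d (M n) (by linarith) hd
    have : 0 < M n := by linarith
    rw [div_le_div_iff₀ hp (by linarith)]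
    have : M n ^ 3 * n ≤ M n ^ 3 * M n := by gcongr
    nlinarith

lemma pos_of_step (f : ℕ → ℝ) (hs : ∀ n, 1 ≤ n → f (n + 1) < f n)
    (hf : Filter.Tendsto f Filter.atTop (nhds 0)) (n : ℕ) (hn : 1 ≤ n) : 0 < f n := by
  have hanti : ∀ k, f (n + 1 + k) ≤ f (n + 1) := by
    intro k
    induction k with
    | zero => simp
    | succ k ih => exact (hs (n + 1 + k) (by omega)).le.trans ih
  have : (0 : ℝ) ≤ f (n + 1) := by
    refine le_of_tendsto hf ?_
    filter_upwards [Filter.eventually_ge_atTop (n + 1)] with m hm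
    obtain ⟨k, rfl⟩ := Nat.exists_eq_add_of_le hm
    exact hanti k
  exact this.trans_lt (hs n hn)

lemma lower (n : ℕ) (hn : 1 ≤ n) : M n ^ 3 / Q 0 (M n) < err n := by
  have := pos_of_step (fun n => err n - M n ^ 3 / Q 0 (M n)) ?_
    (by simpa using err_tendsto.sub (R_tendsto 0 (by norm_num))) n hn
  · simpa using this
  · intro n hn
    have h1 : (1 : ℝ) ≤ n := by exact_mod_cast hn
    have hs := err_step n hn _ rfl
    have hr := rat_lower (n - 1) (by linarith) (M n) (M (n + 1)) (1 / ((n : ℝ) + 1))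
      (by unfold M; ring) (by unfold M; push_cast; ring) (by congr 1; ring)
    have hl := ser_lower (1 / ((n : ℝ) + 1)) (by positivity)
      (by rw [div_lt_one (by positivity)]; linarith)
    linarith

lemma upper (n : ℕ) (hn : 1 ≤ n) :
    err n < M n ^ 3 / Q (187969 / 4042500) (M n) := by
  have := pos_of_step (fun n => M n ^ 3 / Q (187969 / 4042500) (M n) - err n) ?_
    (by simpa using (R_tendsto (187969 / 4042500) (by norm_num)).sub err_tendsto) n hn
  · simpa using this
  · intro n hn
    have h1 : (1 : ℝ) ≤ n := by exact_mod_cast hn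
    have hs := err_step n hn _ rfl
    have hr := rat_upper (n - 1) (by linarith) (M n) (M (n + 1)) (1 / ((n : ℝ) + 1)) _
      (by unfold M; ring) (by unfold M; push_cast; ring) (by congr 1; ring) rfl
    have hl := ser_upper (1 / ((n : ℝ) + 1)) (by positivity)
      (by rw [div_lt_one (by positivity)]; linarith)
    linarith

lemma final (m e : ℝ) (hm : 1 ≤ m) (hl : m ^ 3 / Q 0 m < e)
    (hu : e < m ^ 3 / Q (187969 / 4042500) m) :
    ∃ δ : ℝ, 0 < δ ∧ δ < 187969 / 4042500 ∧
      1 / e - 12 * m = 6 / 5 - 19 / (175 * m) + 13 / (250 * m ^ 2) - δ / m ^ 3 := by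
  have hm0 : 0 < m := by linarith
  have h0 := Q_pos 0 m hm (by norm_num)
  have h1 := Q_pos (187969 / 4042500) m hm (by norm_num)
  have he : 0 < e := lt_trans (by positivity) hl
  rw [div_lt_iff₀ h0] at hl
  rw [lt_div_iff₀ h1] at hu
  refine ⟨Q 0 m - m ^ 3 / e, ?_, ?_, ?_⟩
  · rw [sub_pos, div_lt_iff₀ he]; linarith
  · have : Q (187969 / 4042500) m < m ^ 3 / e := by rw [lt_div_iff₀ he]; linarith
    unfold Q at *
    linarith
  · unfold Q
    field_simp
    ring

end Lodge

theorem lodge_Lambda_expansion (n : ℕ) (hn : 1 ≤ n) :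
    ∃ δ : ℝ, 0 < δ ∧ δ < 187969 / 4042500 ∧
      1 / ((harmonic n : ℝ) -
            ((1 / 2) * Real.log (2 * ((n * (n + 1) : ℝ) / 2)) +
              Real.eulerMascheroniConstant)) -
          12 * ((n * (n + 1) : ℝ) / 2) =
        6 / 5 - 19 / (175 * ((n * (n + 1) : ℝ) / 2)) +
          13 / (250 * ((n * (n + 1) : ℝ) / 2) ^ 2) -
          δ / ((n * (n + 1) : ℝ) / 2) ^ 3 := by
  have h1 : (1 : ℝ) ≤ n := by exact_mod_cast hn
  exact Lodge.final (Lodge.M n) (Lodge.err n) (h1.trans (Lodge.M_ge n hn))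
    (Lodge.lower n hn) (Lodge.upper n hn)
end

section
/- For every natural number n ≥ 1, define λ_n by H_n = ln(√(n(n+1))) + γ + 1/(6n(n+1) + λ_n). Then the sequence {λ_n} is strictly monotonically increasing. -/
open Real

namespace LamAux

open Filter Topology

/-- Partial asymptotic expansion (in terms of `N = n (n + 1)`). -/
noncomputable def U (N : ℝ) : ℝ := 1 / (6 * N) - 1 / (30 * N ^ 2) + 4 / (315 * N ^ 3)

/-- Lower bound for the differences. -/
noncomputable def dl (m : ℝ) : ℝ :=
  1 / (3 * m ^ 3) + 1 / (5 * m ^ 5) + 1 / (7 * m ^ 7) + 1 / (9 * m ^ 9)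

/-- Upper bound for the differences. -/
noncomputable def du (m : ℝ) : ℝ :=
  dl m + 1 / (11 * m ^ 11) + 1 / (m ^ 11 * (m ^ 2 - 1))

/-- The error term. -/
noncomputable def e (n : ℕ) : ℝ :=
  (harmonic n : ℝ) - Real.log (Real.sqrt (n * (n + 1))) - Real.eulerMascheroniConstant

lemma du_le (m : ℝ) (hm : 2 ≤ m) : du m ≤ U (m * (m - 1)) - U (m * (m + 1)) := by
  obtain ⟨t, ht, rfl⟩ : ∃ t : ℝ, 0 ≤ t ∧ m = t + 2 := ⟨m - 2, by linarith, by ring⟩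
  rw [← sub_nonneg]
  have h1 : t + 2 - 1 = t + 1 := by ring
  have h2 : (t + 2) ^ 2 - 1 = (t + 1) * (t + 3) := by ring
  have h3 : t + 2 + 1 = t + 3 := by ring
  have a1 : t + 1 ≠ 0 := by positivity
  have a2 : t + 2 ≠ 0 := by positivity
  have a3 : t + 3 ≠ 0 := by positivity
  have key : U ((t + 2) * (t + 2 - 1)) - U ((t + 2) * (t + 2 + 1)) - du (t + 2) =
      (168424/3465 * t ^ 0 + 140216/495 * t ^ 1 + 39902/55 * t ^ 2 + 3683216/3465 * t ^ 3 + 683498/693 * t ^ 4 + 140816/231 * t ^ 5 + 98804/385 * t ^ 6 + 84736/1155 * t ^ 7 + 15856/1155 * t ^ 8 + 32/21 * t ^ 9 + 8/105 * t ^ 10) / ((t + 2) ^ 13 * ((t + 1) * (t + 3)) ^ 3) := by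
    unfold U du dl
    rw [h1, h2, h3]
    field_simp
    ring
  rw [key]
  positivity

lemma dl_gt (m : ℝ) (hm : 2 ≤ m) :
    12 * m * U (m * (m + 1)) * (U (m * (m + 1)) + dl m) < dl m := by
  obtain ⟨t, ht, rfl⟩ : ∃ t : ℝ, 0 ≤ t ∧ m = t + 2 := ⟨m - 2, by linarith, by ring⟩
  rw [← sub_pos]
  have h3 : t + 2 + 1 = t + 3 := by ring
  have a2 : t + 2 ≠ 0 := by positivity
  have a3 : t + 3 ≠ 0 := by positivity
  have key : dl (t + 2) - 12 * (t + 2) * U ((t + 2) * (t + 2 + 1)) *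
      (U ((t + 2) * (t + 2 + 1)) + dl (t + 2)) =
      (19326464/6615 * t ^ 0 + 135346496/6615 * t ^ 1 + 2176493632/33075 * t ^ 2 + 611038928/4725 * t ^ 3 + 1151384032/6615 * t ^ 4 + 804400292/4725 * t ^ 5 + 591434428/4725 * t ^ 6 + 2332392829/33075 * t ^ 7 + 203175986/6615 * t ^ 8 + 342244328/33075 * t ^ 9 + 2527858/945 * t ^ 10 + 17234783/33075 * t ^ 11 + 38858/525 * t ^ 12 + 3797/525 * t ^ 13 + 76/175 * t ^ 14 + 19/1575 * t ^ 15) / ((t + 2) ^ 16 * (t + 3) ^ 6) := by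
    unfold U dl
    rw [h3]
    field_simp
    ring
  rw [key]
  positivity

lemma U_small (m : ℝ) (hm : 2 ≤ m) : 12 * m * U (m * (m + 1)) < 1 := by
  have hN : 6 ≤ m * (m + 1) := by nlinarith
  have hU : U (m * (m + 1)) ≤ 1 / (6 * (m * (m + 1))) := by
    unfold U
    generalize m * (m + 1) = N at hN
    have : 4 / (315 * N ^ 3) ≤ 1 / (30 * N ^ 2) := by
      rw [div_le_div_iff₀ (by positivity) (by positivity)]
      nlinarith [sq_nonneg N, pow_pos (show (0:ℝ) < N by linarith) 2]
    linarith
  have h0 : (0:ℝ) < m := by linarith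
  calc 12 * m * U (m * (m + 1)) ≤ 12 * m * (1 / (6 * (m * (m + 1)))) := by gcongr
    _ = 2 / (m + 1) := by field_simp; norm_num
    _ < 1 := by rw [div_lt_one (by linarith)]; linarith

lemma e_sub (n : ℕ) (hn : 1 ≤ n) : e n - e (n + 1) =
    1 / 2 * Real.log ((1 + 1 / ((n:ℝ) + 1)) / (1 - 1 / ((n:ℝ) + 1))) - 1 / ((n:ℝ) + 1) := by
  have h0 : (0:ℝ) < n := by exact_mod_cast hn
  have hx : (1 + 1 / ((n:ℝ) + 1)) / (1 - 1 / ((n:ℝ) + 1)) = (n + 2) / n := by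
    have : 1 - 1 / ((n:ℝ) + 1) = n / (n + 1) := by field_simp; ring
    rw [this]
    field_simp
    ring
  rw [hx]
  unfold e
  rw [harmonic_succ, Real.log_sqrt (by positivity), Real.log_sqrt (by positivity),
    Real.log_mul (by positivity) (by positivity), Real.log_mul (by positivity) (by positivity),
    Real.log_div (by positivity) (by positivity)]
  push_cast
  rw [show (n:ℝ) + 1 + 1 = n + 2 by ring]
  field_simp
  ring

lemma e_sub_ge (n : ℕ) (hn : 1 ≤ n) : dl ((n:ℝ) + 1) ≤ e n - e (n + 1) := by
  have h0 : (0:ℝ) < n := by exact_mod_cast hn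
  rw [e_sub n hn]
  have := Real.sum_range_le_log_div (x := 1 / ((n:ℝ) + 1)) (by positivity)
    (by rw [div_lt_one (by positivity)]; linarith) 5
  simp only [Finset.sum_range_succ, Finset.sum_range_zero] at this
  refine le_trans (le_of_eq ?_) (sub_le_sub_right this _)
  unfold dl
  generalize (n:ℝ) + 1 = m at *
  simp only [div_pow, one_pow, Nat.cast_zero, Nat.cast_one, Nat.cast_ofNat]
  norm_num
  try field_simp
  try ring

lemma e_sub_le (n : ℕ) (hn : 1 ≤ n) : e n - e (n + 1) ≤ du ((n:ℝ) + 1) := by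
  have h0 : (0:ℝ) < n := by exact_mod_cast hn
  rw [e_sub n hn]
  have := Real.log_div_le_sum_range_add (x := 1 / ((n:ℝ) + 1)) (by positivity)
    (by rw [div_lt_one (by positivity)]; linarith) 6
  simp only [Finset.sum_range_succ, Finset.sum_range_zero] at this
  refine le_trans (sub_le_sub_right this _) (le_of_eq ?_)
  have h2 : ((n:ℝ) + 1) ^ 2 - 1 = n * (n + 2) := by ring
  have h4 : 1 - (1 / ((n:ℝ) + 1)) ^ 2 = n * (n + 2) / (n + 1) ^ 2 := by field_simp; ring
  unfold du dl
  rw [h2, h4]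
  have hm : (n:ℝ) + 1 ≠ 0 := by positivity
  have hk : (n:ℝ) + 2 ≠ 0 := by positivity
  have h5 : (1 / ((n:ℝ) + 1)) ^ (2 * 6 + 1) / (n * (n + 2) / (n + 1) ^ 2) =
      1 / (((n:ℝ) + 1) ^ 11 * (n * (n + 2))) := by
    simp only [div_pow, one_pow]
    field_simp
  rw [h5]
  generalize (n:ℝ) + 1 = m at *
  simp only [div_pow, one_pow, Nat.cast_zero, Nat.cast_one, Nat.cast_ofNat]
  norm_num
  try field_simp
  try ring

lemma e_tendsto : Tendsto e atTop (𝓝 0) := by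
  have h1 := Real.tendsto_harmonic_sub_log
  have h2 := Real.tendsto_harmonic_sub_log_add_one
  have h3 := ((h1.add h2).div_const 2).sub_const Real.eulerMascheroniConstant
  have h4 : (Real.eulerMascheroniConstant + Real.eulerMascheroniConstant) / 2 -
    Real.eulerMascheroniConstant = 0 := by ring
  rw [h4] at h3
  refine h3.congr' ?_
  filter_upwards [eventually_ge_atTop 1] with n hn
  have h0 : (0:ℝ) < n := by exact_mod_cast hn
  unfold e
  rw [Real.log_sqrt (by positivity), Real.log_mul (by positivity) (by positivity)]
  ring

lemma U_tendsto : Tendsto (fun n : ℕ => U ((n:ℝ) * (n + 1))) atTop (𝓝 0) := by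
  have hN : Tendsto (fun n : ℕ => ((n:ℝ) * (n + 1))) atTop atTop :=
    tendsto_natCast_atTop_atTop.atTop_mul_atTop₀
      (tendsto_atTop_add_const_right _ _ tendsto_natCast_atTop_atTop)
  have hi : Tendsto (fun n : ℕ => ((n:ℝ) * (n + 1))⁻¹) atTop (𝓝 0) := tendsto_inv_atTop_zero.comp hN
  have := ((hi.const_mul (1 / 6)).sub ((hi.pow 2).const_mul (1 / 30))).add
    ((hi.pow 3).const_mul (4 / 315))
  norm_num at this
  refine this.congr fun n => ?_
  unfold U
  simp only [div_eq_mul_inv, mul_inv, mul_pow, ← inv_pow]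
  ring

lemma dl_pos (m : ℝ) (hm : 0 < m) : 0 < dl m := by
  unfold dl
  positivity

lemma e_pos (n : ℕ) (hn : 1 ≤ n) : 0 < e n := by
  have hanti : StrictAnti (fun k => e (k + 1)) := strictAnti_nat_of_succ_lt fun k => by
    have h1 := e_sub_ge (k + 1) (by omega)
    have h2 := dl_pos (((k + 1 : ℕ) : ℝ) + 1) (by positivity)
    linarith
  have ht : Tendsto (fun k => e (k + 1)) atTop (𝓝 0) := e_tendsto.comp (tendsto_add_atTop_nat 1)
  obtain ⟨k, rfl⟩ : ∃ k, n = k + 1 := ⟨n - 1, by omega⟩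
  exact (hanti.antitone.le_of_tendsto ht (k + 1)).trans_lt (hanti (Nat.lt_succ_self k))

lemma e_le (n : ℕ) (hn : 1 ≤ n) : e n ≤ U ((n:ℝ) * (n + 1)) := by
  have hanti : Antitone (fun k : ℕ => U (((k + 1 : ℕ):ℝ) * ((k + 1 : ℕ) + 1)) - e (k + 1)) :=
    antitone_nat_of_succ_le fun k => by
      have h1 := e_sub_le (k + 1) (by omega)
      have hk : (0:ℝ) ≤ k := by positivity
      have h2 := du_le (((k + 1 : ℕ) : ℝ) + 1) (by push_cast; linarith)
      have e1 : (((k + 1 : ℕ) : ℝ) + 1) * (((k + 1 : ℕ) : ℝ) + 1 - 1) =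
        ((k + 1 : ℕ):ℝ) * ((k + 1 : ℕ) + 1) := by ring
      have e2 : (((k + 1 : ℕ) : ℝ) + 1) * (((k + 1 : ℕ) : ℝ) + 1 + 1) =
        ((k + 1 + 1 : ℕ):ℝ) * ((k + 1 + 1 : ℕ) + 1) := by push_cast; ring
      rw [e1, e2] at h2
      linarith
  have ht : Tendsto (fun k : ℕ => U (((k + 1 : ℕ):ℝ) * ((k + 1 : ℕ) + 1)) - e (k + 1)) atTop
      (𝓝 (0 - 0)) :=
    (U_tendsto.sub e_tendsto).comp (tendsto_add_atTop_nat 1)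
  obtain ⟨k, rfl⟩ : ∃ k, n = k + 1 := ⟨n - 1, by omega⟩
  have := hanti.le_of_tendsto ht k
  linarith

lemma step (n : ℕ) (hn : 1 ≤ n) :
    1 / e n - 6 * n * (n + 1) < 1 / e (n + 1) - 6 * (n + 1 : ℕ) * ((n + 1 : ℕ) + 1) := by
  have p0 := e_pos n hn
  have p1 := e_pos (n + 1) (by omega)
  have hle := e_le (n + 1) (by omega)
  have hd := e_sub_ge n hn
  have hm : (2:ℝ) ≤ (n:ℝ) + 1 := by
    have : (1:ℝ) ≤ n := by exact_mod_cast hn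
    linarith
  push_cast at hle ⊢
  have hs := U_small _ hm
  have hg := dl_gt _ hm
  have hdp := dl_pos ((n:ℝ) + 1) (by linarith)
  generalize U (((n:ℝ) + 1) * ((n:ℝ) + 1 + 1)) = u at *
  generalize dl ((n:ℝ) + 1) = d at *
  generalize e (n + 1) = b at *
  generalize e n = a at *
  have hm0 : (0:ℝ) ≤ 12 * ((n:ℝ) + 1) := by linarith
  have key : 12 * ((n:ℝ) + 1) * b * a < a - b := by
    have i1 : 12 * ((n:ℝ) + 1) * b * a ≤ 12 * ((n:ℝ) + 1) * u * (u + (a - b)) := by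
      have : a ≤ u + (a - b) := by linarith
      have hu : 0 ≤ u := by linarith
      gcongr
    have i2 : 0 ≤ (1 - 12 * ((n:ℝ) + 1) * u) * (a - b - d) :=
      mul_nonneg (by linarith) (by linarith)
    linarith
  have : 12 * ((n:ℝ) + 1) < 1 / b - 1 / a := by
    rw [div_sub_div _ _ p1.ne' p0.ne', lt_div_iff₀ (by positivity)]
    linarith
  linarith

end LamAux

theorem lambda_strictMono :
    StrictMonoOn
      (fun n : ℕ =>
        1 / ((harmonic n : ℝ) - Real.log (Real.sqrt (n * (n + 1))) -
            Real.eulerMascheroniConstant) - 6 * n * (n + 1))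
      (Set.Ici 1) := by
  have h : StrictMono (fun k : ℕ =>
      1 / LamAux.e (k + 1) - 6 * (k + 1 : ℕ) * ((k + 1 : ℕ) + 1)) :=
    strictMono_nat_of_lt_succ fun k => LamAux.step (k + 1) (by omega)
  intro a ha b hb hab
  simp only [Set.mem_Ici] at ha hb
  obtain ⟨k, rfl⟩ : ∃ k, a = k + 1 := ⟨a - 1, by omega⟩
  obtain ⟨l, rfl⟩ : ∃ l, b = l + 1 := ⟨b - 1, by omega⟩
  exact h (show k < l by omega)
end

section
/- For every positive integer n and every positive integer r there exists θ_r with 0 < θ_r < 1 such that H_n = ln(n + 1/2) + γ + ∑_{p=1}^r D_p/(n + 1/2)^{2p} + θ_r · D_{r+1}/(n + 1/2)^{2r+2}, where D_p := −B_{2p}(1/2)/(2p) and B_{2p}(x) is the Bernoulli polynomial of order 2p. -/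
open Real Finset

/-- The coefficient `D_p = -B_{2p}(1/2)/(2p)` in the DeTemple--Wang expansion. -/
noncomputable def detempleWangCoeff (p : ℕ) : ℝ :=
  -(((Polynomial.bernoulli (2 * p)).eval ((1 : ℚ) / 2) : ℚ) : ℝ) / (2 * p)

namespace DeTempleWang

open Set MeasureTheory intervalIntegral Filter Topology

lemma bern_half (k : ℕ) : bernoulliFun (2 * k + 1) (1 / 2) = 0 := by
  have h := bernoulliFun_eval_one_sub (k := 2 * k + 1) (x := 1 / 2)
  have e : (1 : ℝ) - 1 / 2 = 1 / 2 := by norm_num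
  have e2 : (-1 : ℝ) ^ (2 * k + 1) = -1 := by rw [pow_succ, pow_mul]; norm_num
  rw [e, e2] at h
  linarith

lemma bern_zero (k : ℕ) : bernoulliFun (2 * k + 3) 0 = 0 := by
  rw [bernoulliFun_eval_zero, bernoulli_eq_zero_of_odd ⟨k + 1, by ring⟩ (by omega)]
  simp

lemma bern_sign (k : ℕ) : ∀ u ∈ Ioo (0 : ℝ) (1 / 2),
    0 < (-1 : ℝ) ^ (k + 1) * bernoulliFun (2 * k + 1) u := by
  induction k with
  | zero =>
    intro u hu
    have h2 := hu.2
    simp only [mul_zero, zero_add, pow_one, bernoulliFun_one]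
    linarith
  | succ k ih =>
    intro u hu
    set f : ℝ → ℝ := fun u => (-1 : ℝ) ^ (k + 1) * bernoulliFun (2 * k + 3) u with hf
    have d1 : deriv f = fun u => (-1 : ℝ) ^ (k + 1) * ((2 * k + 3 : ℕ) * bernoulliFun (2 * k + 2) u) := by
      funext x
      exact ((hasDerivAt_bernoulliFun (2 * k + 3) x).const_mul _).deriv
    have d2 : ∀ x, deriv^[2] f x = (-1 : ℝ) ^ (k + 1) *
        ((2 * k + 3 : ℕ) * ((2 * k + 2 : ℕ) * bernoulliFun (2 * k + 1) x)) := by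
      intro x
      show deriv (deriv f) x = _
      rw [d1]
      exact (((hasDerivAt_bernoulliFun (2 * k + 2) x).const_mul _).const_mul _).deriv
    have hc : StrictConvexOn ℝ (Icc (0 : ℝ) (1 / 2)) f := by
      apply strictConvexOn_of_deriv2_pos (convex_Icc _ _)
      · exact (continuous_const.mul (continuous_bernoulliFun _)).continuousOn
      · intro x hx
        rw [interior_Icc] at hx
        rw [d2]
        have := ih x hx
        have e : (-1 : ℝ) ^ (k + 1) *
          ((2 * k + 3 : ℕ) * ((2 * k + 2 : ℕ) * bernoulliFun (2 * k + 1) x)) =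
          ((2 * k + 3 : ℕ) * (2 * k + 2 : ℕ) : ℝ) *
            ((-1 : ℝ) ^ (k + 1) * bernoulliFun (2 * k + 1) x) := by ring
        rw [e]
        positivity
    have h0 : f 0 = 0 := by simp [hf, bern_zero]
    have h1 : f (1 / 2) = 0 := by
      have := bern_half (k + 1)
      rw [show 2 * (k + 1) + 1 = 2 * k + 3 by ring] at this
      simp only [hf]
      rw [this, mul_zero]
    have := hc.lt_on_openSegment (x := 0) (y := 1 / 2) (z := u) (by norm_num) (by norm_num)
      (by norm_num) (by rw [openSegment_eq_Ioo (by norm_num)]; exact hu)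
    rw [h0, h1, max_self] at this
    rw [show 2 * (k + 1) + 1 = 2 * k + 3 by ring, pow_succ]
    simp only [hf] at this
    linarith

/-- Normalised derivatives of `1/(m-v) + 1/(m+v)`. -/
noncomputable def G (m : ℝ) (j : ℕ) (v : ℝ) : ℝ :=
  ((m - v) ^ (j + 1))⁻¹ + (-1) ^ j * ((m + v) ^ (j + 1))⁻¹

lemma hasDerivAt_G {m v : ℝ} (j : ℕ) (h1 : 0 < m - v) (h2 : 0 < m + v) :
    HasDerivAt (G m j) ((j + 1) * G m (j + 1) v) v := by
  have a := ((((hasDerivAt_id v).const_sub m).pow (j + 1)).inv (pow_pos h1 _).ne')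
  have b := (((((hasDerivAt_id v).const_add m).pow (j + 1)).inv (pow_pos h2 _).ne').const_mul
    ((-1 : ℝ) ^ j))
  refine (a.add b).congr_deriv ?_
  simp only [G, id, Pi.pow_apply]
  push_cast
  field_simp
  ring

lemma cont_G {m : ℝ} (hm : 1 ≤ m) (j : ℕ) : ContinuousOn (G m j) (uIcc 0 (1 / 2)) := by
  intro v hv
  rw [Set.uIcc_of_le (by norm_num)] at hv
  exact (hasDerivAt_G j (by linarith [hv.2]) (by linarith [hv.1])).continuousAt.continuousWithinAt

/-- The Euler Maclaurin remainder integrals. -/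
noncomputable def J (m : ℝ) (j : ℕ) : ℝ := ∫ v in (0 : ℝ)..(1 / 2), G m j v * bernoulliFun j v

lemma J_rec {m : ℝ} (hm : 1 ≤ m) (j : ℕ) :
    J m j = G m j (1 / 2) * (bernoulliFun (j + 1) (1 / 2) / (j + 1))
      - G m j 0 * (bernoulliFun (j + 1) 0 / (j + 1)) - J m (j + 1) := by
  unfold J
  rw [intervalIntegral.integral_mul_deriv_eq_deriv_mul (u := G m j) (u' := fun v => (j + 1) * G m (j + 1) v)
    (v := fun x => bernoulliFun (j + 1) x / (j + 1)) (v' := bernoulliFun j)]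
  · congr 1
    apply integral_congr
    intro x _
    have : (j + 1 : ℝ) ≠ 0 := by positivity
    simp only
    field_simp
  · intro v hv
    rw [Set.uIcc_of_le (by norm_num)] at hv
    exact hasDerivAt_G j (by linarith [hv.2]) (by linarith [hv.1])
  · intro v _
    exact antideriv_bernoulliFun j v
  · exact (continuousOn_const.mul (cont_G hm (j + 1))).intervalIntegrable
  · exact intervalIntegrable_bernoulliFun _ _ _

lemma J_zero {m : ℝ} (hm : 1 ≤ m) : J m 0 = log (m + 1 / 2) - log (m - 1 / 2) := by
  unfold J
  rw [integral_eq_sub_of_hasDerivAt (f := fun v => log (m + v) - log (m - v))]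
  · simp
  · intro v hv
    rw [Set.uIcc_of_le (by norm_num)] at hv
    have h1 : 0 < m - v := by linarith [hv.2]
    have h2 : 0 < m + v := by linarith [hv.1]
    refine ((((hasDerivAt_id v).const_add m).log h2.ne').sub
      (((hasDerivAt_id v).const_sub m).log h1.ne')).congr_deriv ?_
    simp [G]
    field_simp
    ring
  · exact ((cont_G hm 0).mul (continuous_bernoulliFun 0).continuousOn).intervalIntegrable

lemma J_one {m : ℝ} (hm : 1 ≤ m) :
    J m 1 = 1 / m - (log (m + 1 / 2) - log (m - 1 / 2)) := by
  have h := J_rec hm 0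
  rw [J_zero hm] at h
  simp [G] at h
  rw [one_div m]
  linarith

lemma coeff_eq (p : ℕ) : detempleWangCoeff p = - bernoulliFun (2 * p) (1 / 2) / (2 * p) := by
  unfold detempleWangCoeff bernoulliFun
  congr 2
  have h : (1 / 2 : ℝ) = algebraMap ℚ ℝ (1 / 2) := by simp
  rw [h, Polynomial.eval_map_apply]
  simp

lemma J_step {m : ℝ} (hm : 1 ≤ m) (k : ℕ) :
    J m (2 * k + 1) = - detempleWangCoeff (k + 1) *
      (((m - 1 / 2) ^ (2 * (k + 1)))⁻¹ - ((m + 1 / 2) ^ (2 * (k + 1)))⁻¹) + J m (2 * k + 3) := by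
  have a := J_rec hm (2 * k + 1)
  have b := J_rec hm (2 * k + 2)
  have c := bern_half (k + 1)
  rw [show 2 * (k + 1) + 1 = 2 * k + 2 + 1 by ring] at c
  rw [c, bern_zero k] at b
  have e2 : (-1 : ℝ) ^ (2 * k + 1) = -1 := by rw [pow_succ, pow_mul]; norm_num
  have g0 : G m (2 * k + 1) 0 = 0 := by simp [G, e2]
  rw [g0] at a
  rw [coeff_eq, show 2 * (k + 1) = 2 * k + 1 + 1 by ring, a, show 2 * k + 1 + 1 = 2 * k + 2 by ring,
    b, G, e2]
  push_cast
  simp only [show 2 * k + 1 + 1 = 2 * k + 2 by ring, show 2 * k + 2 + 1 = 2 * k + 3 by ring]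
  have : (2 * (k : ℝ) + 2) ≠ 0 := by positivity
  field_simp
  ring

lemma J_sum {m : ℝ} (hm : 1 ≤ m) (r : ℕ) :
    J m 1 = - (∑ p ∈ Finset.Icc 1 r, detempleWangCoeff p *
      (((m - 1 / 2) ^ (2 * p))⁻¹ - ((m + 1 / 2) ^ (2 * p))⁻¹)) + J m (2 * r + 1) := by
  induction r with
  | zero => simp
  | succ r ih =>
    rw [Finset.sum_Icc_succ_top (by omega), ih, J_step hm r,
      show 2 * (r + 1) + 1 = 2 * r + 3 by ring]
    ring

lemma J_sign {m : ℝ} (hm : 1 ≤ m) (k : ℕ) : 0 < (-1 : ℝ) ^ (k + 1) * J m (2 * k + 1) := by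
  unfold J
  rw [← intervalIntegral.integral_const_mul]
  apply intervalIntegral_pos_of_pos_on
  · exact (continuousOn_const.mul ((cont_G hm _).mul
      (continuous_bernoulliFun _).continuousOn)).intervalIntegrable
  · intro v hv
    have h := bern_sign k v hv
    have e2 : (-1 : ℝ) ^ (2 * k + 1) = -1 := by rw [pow_succ, pow_mul]; norm_num
    have g : 0 < G m (2 * k + 1) v := by
      unfold G
      rw [e2]
      have h1 : 0 < m - v := by linarith [hv.2]
      have h2 : m - v < m + v := by linarith [hv.1]
      have := inv_strictAnti₀ (pow_pos h1 (2 * k + 1 + 1)) (pow_lt_pow_left₀ h2 h1.le (by omega))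
      linarith
    have := mul_pos g h
    linarith
  · norm_num

/-- Remainder of the expansion. -/
noncomputable def R (r n : ℕ) : ℝ :=
  (harmonic n : ℝ) - Real.log (n + 1 / 2) - Real.eulerMascheroniConstant -
    ∑ p ∈ Finset.Icc 1 r, detempleWangCoeff p / (n + 1 / 2 : ℝ) ^ (2 * p)

lemma R_diff (r n : ℕ) : R r n - R r (n + 1) = - J (n + 1) (2 * r + 1) := by
  have hm : (1 : ℝ) ≤ n + 1 := by linarith [Nat.cast_nonneg (α := ℝ) n]
  have h1 := J_sum hm r
  rw [J_one hm] at h1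
  have e1 : (n : ℝ) + 1 - 1 / 2 = n + 1 / 2 := by ring
  rw [e1] at h1
  simp only [mul_sub, Finset.sum_sub_distrib] at h1
  unfold R
  rw [harmonic_succ]
  push_cast
  simp only [div_eq_mul_inv, one_mul] at h1 ⊢
  linarith

lemma R_tendsto (r : ℕ) : Tendsto (R r) atTop (𝓝 0) := by
  have hx : Tendsto (fun n : ℕ => (n : ℝ) + 1 / 2) atTop atTop :=
    tendsto_atTop_add_const_right _ _ tendsto_natCast_atTop_atTop
  have hs : Tendsto (fun n : ℕ => ∑ p ∈ Finset.Icc 1 r,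
      detempleWangCoeff p / ((n : ℝ) + 1 / 2) ^ (2 * p)) atTop (𝓝 (∑ p ∈ Finset.Icc 1 r, 0)) := by
    apply tendsto_finsetSum
    intro p hp
    have := (Finset.mem_Icc.mp hp).1
    exact tendsto_const_nhds.div_atTop ((tendsto_pow_atTop (by omega)).comp hx)
  have hl : Tendsto (fun n : ℕ => log ((n : ℝ) + 1 / 2) - log n) atTop (𝓝 0) :=
    (Real.tendsto_log_comp_add_sub_log (1 / 2)).comp tendsto_natCast_atTop_atTop
  have h := ((Real.tendsto_harmonic_sub_log.sub hl).sub
    (tendsto_const_nhds (x := Real.eulerMascheroniConstant))).sub hs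
  simp only [Finset.sum_const_zero, sub_zero, sub_self] at h
  refine h.congr fun n => ?_
  unfold R
  ring

lemma R_sign (r n : ℕ) : 0 < (-1 : ℝ) ^ r * R r n := by
  have hanti : StrictAnti (fun n => (-1 : ℝ) ^ r * R r n) := by
    apply strictAnti_nat_of_succ_lt
    intro n
    have hm : (1 : ℝ) ≤ n + 1 := by linarith [Nat.cast_nonneg (α := ℝ) n]
    have h1 := J_sign hm r
    have h2 := R_diff r n
    have h3 : (-1 : ℝ) ^ r * R r n - (-1 : ℝ) ^ r * R r (n + 1) =
      (-1 : ℝ) ^ (r + 1) * J (n + 1) (2 * r + 1) := by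
      rw [← mul_sub, h2, pow_succ]; ring
    linarith
  have ht : Tendsto (fun n => (-1 : ℝ) ^ r * R r n) atTop (𝓝 0) := by
    simpa using (R_tendsto r).const_mul ((-1 : ℝ) ^ r)
  exact lt_of_le_of_lt (hanti.antitone.le_of_tendsto ht (n + 1)) (hanti (Nat.lt_succ_self n))

end DeTempleWang

theorem detemple_wang_expansion (n : ℕ) (hn : 0 < n) (r : ℕ) (hr : 0 < r) :
    ∃ θ : ℝ, 0 < θ ∧ θ < 1 ∧
      (harmonic n : ℝ) =
        Real.log (n + 1 / 2) + Real.eulerMascheroniConstant +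
          (∑ p ∈ Finset.Icc 1 r, detempleWangCoeff p / (n + 1 / 2 : ℝ) ^ (2 * p)) +
          θ * detempleWangCoeff (r + 1) / (n + 1 / 2 : ℝ) ^ (2 * r + 2) := by
  have h1 := DeTempleWang.R_sign r n
  have h2 := DeTempleWang.R_sign (r + 1) n
  set d : ℝ := detempleWangCoeff (r + 1) / (n + 1 / 2 : ℝ) ^ (2 * r + 2) with hd
  have h3 : DeTempleWang.R (r + 1) n = DeTempleWang.R r n - d := by
    unfold DeTempleWang.R
    rw [Finset.sum_Icc_succ_top (by omega), hd, show 2 * (r + 1) = 2 * r + 2 by ring]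
    ring
  have hR : (harmonic n : ℝ) = Real.log (n + 1 / 2) + Real.eulerMascheroniConstant +
          (∑ p ∈ Finset.Icc 1 r, detempleWangCoeff p / (n + 1 / 2 : ℝ) ^ (2 * p)) +
          DeTempleWang.R r n := by
    unfold DeTempleWang.R
    ring
  rw [h3] at h2
  generalize DeTempleWang.R r n = ρ at *
  have h4 : (-1 : ℝ) ^ r * ρ < (-1 : ℝ) ^ r * d := by
    rw [pow_succ] at h2; linarith
  have h5 : 0 < (-1 : ℝ) ^ r * d := h1.trans h4
  have hs : (-1 : ℝ) ^ r ≠ 0 := pow_ne_zero _ (by norm_num)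
  have hd0 : d ≠ 0 := fun h => by rw [h, mul_zero] at h5; exact lt_irrefl _ h5
  have e : ρ / d = ((-1 : ℝ) ^ r * ρ) / ((-1 : ℝ) ^ r * d) := (mul_div_mul_left _ _ hs).symm
  refine ⟨ρ / d, ?_, ?_, ?_⟩
  · rw [e]; exact div_pos h1 h5
  · rw [e]; exact (div_lt_one h5).2 h4
  · rw [mul_div_assoc, ← hd, div_mul_cancel₀ _ hd0]
    exact hR
end
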